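/- There is an absolute constant C ≥ 1 such that for all 1 ≤ p ≤ ∞ and all positive integers m, n, the projection constant of the space of m-homogeneous polynomials on ℓ_p^n satisfies λ(𝒫(^m ℓ_p^n)) ≤ C^m · (1 + n/m)^{m(1 - 1/min(p,2))}. -/

import Mathlib

open Finset MeasureTheory
open scoped ENNReal

/-- Coefficient space of `m`-homogeneous polynomials on `ℂ^n`: families of complex
numbers indexed by the multi-indices `α` with `|α| = m`. -/
abbrev Coef (n m : ℕ) :=
  { α : Fin n → ℕ // α ∈ Finset.Nat.antidiagonalTuple n m } → ℂ

/-- Evaluation of the `m`-homogeneous polynomial `∑_{|α|=m} a_α z^α` at `z ∈ ℂ^n`. -/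
noncomputable def evalC {n m : ℕ} (a : Coef n m) (z : Fin n → ℂ) : ℂ :=
  ∑ α : { α : Fin n → ℕ // α ∈ Finset.Nat.antidiagonalTuple n m },
    a α * ∏ i, z i ^ (α : Fin n → ℕ) i

/-- The `ℓ_p`-norm of a vector in `ℂ^n`, for `1 ≤ p ≤ ∞`. -/
noncomputable def pNorm (p : ℝ≥0∞) {n : ℕ} (z : Fin n → ℂ) : ℝ :=
  if p = ∞ then ⨆ i, ‖z i‖ else (∑ i, ‖z i‖ ^ p.toReal) ^ (1 / p.toReal)

/-- The norm of `𝒫(^m ℓ_p^n)`: `‖P‖ = sup_{‖z‖_p ≤ 1} |P(z)|`. -/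
noncomputable def polyNormLp (p : ℝ≥0∞) (n m : ℕ) (a : Coef n m) : ℝ :=
  sSup {x : ℝ | ∃ z : Fin n → ℂ, pNorm p z ≤ 1 ∧ x = ‖evalC a z‖}

/-- The projection constant of `(V, νV)`: the supremum, over all isometric linear
embeddings `I : V → Z` into Banach spaces `Z`, of the infimum of `‖P‖` over all bounded
linear projections `P` of `Z` onto `I(V)`. -/
noncomputable def projConstWith (V : Type*) [AddCommGroup V] [Module ℂ V]
    (νV : V → ℝ) : ℝ :=
  sSup {x : ℝ |
    ∃ (Z : Type) (_iZ : NormedAddCommGroup Z) (_iS : NormedSpace ℂ Z) (I : V →ₗ[ℂ] Z),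
      (∀ v, ‖I v‖ = νV v) ∧
      x = sInf {c : ℝ | ∃ P : Z →L[ℂ] Z,
        (∀ v, P (I v) = I v) ∧ (∀ z, ∃ v, P z = I v) ∧ c = ‖P‖}}

/-!
Put `N = #{α : |α| = m}` and `s = 1 / min(p, 2)`; the bound follows from
`λ ≤ N ^ (1 - s) * (e ^ m) ^ s` and `N ≤ e ^ m * (1 + n / m) ^ m`.

Sample a polynomial at finitely many points of the unit ball `K`, giving a map into some `ℓ_∞^J`,
and reconstruct it linearly; by Hahn–Banach in each coordinate, the norm of the reconstruction
bounds the projection constant. The samples are the translates of points `w j ∈ K` by the torus of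
`(m + 1)`-th roots of unity, whose characters separate the monomials, so that only weights `c j α`
with `∑ j, c j α * w j ^ α = 1` remain to be chosen. By `L¹ ≤ L²` on the torus, the cost at `z` is
at most `∑ j, (∑ α, |c j α * z ^ α| ^ 2) ^ (1 / 2)`.

* For finite `p` use one point for each `α`, the maximiser of `|z ^ α|` on `K`. The cost is
  `∑ α, |z ^ α| / max |w ^ α|`, controlled by Hölder's inequality and the multinomial theorem.
* For every `p` the cost is at most `√N`: choose a probability measure on `K` maximising
  `∏ α, ∫ |w ^ α| ^ 2`, so that `∑ α, |z ^ α| ^ 2 / ∫ |w ^ α| ^ 2 ≤ N` on `K`, and take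
  `c j α` proportional to the conjugate of `w j ^ α`.
-/

open scoped BigOperators ComplexConjugate

section ProjectionConstant

theorem exists_extension_pi_norm_le {𝕜 E J : Type*} [RCLike 𝕜] [SeminormedAddCommGroup E]
    [NormedSpace 𝕜 E] [Fintype J] (S : Submodule 𝕜 E) (f : S →L[𝕜] (J → 𝕜)) :
    ∃ g : E →L[𝕜] (J → 𝕜), (∀ x : S, g x = f x) ∧ ‖g‖ ≤ ‖f‖ := by
  choose g hgf hg using fun j => exists_extension_norm_eq S ((ContinuousLinearMap.proj j).comp f)
  refine ⟨ContinuousLinearMap.pi g, fun x => funext fun j => hgf j x,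
    ContinuousLinearMap.norm_pi_le_of_le (fun j => (hg j).trans_le ?_) (norm_nonneg f)⟩
  exact ContinuousLinearMap.opNorm_le_bound _ (norm_nonneg f) fun x =>
    (norm_le_pi_norm (f x) j).trans (f.le_opNorm x)

theorem projConstWith_le_of_factor_pi {V J : Type*} [AddCommGroup V] [Module ℂ V] [Fintype J]
    {ν : V → ℝ} {φ : V →ₗ[ℂ] (J → ℂ)} {ψ : (J → ℂ) →ₗ[ℂ] V} {B : ℝ} (hB : 0 ≤ B)
    (hφ : ∀ v, ‖φ v‖ ≤ ν v) (hψ : ∀ c, ν (ψ c) ≤ B * ‖c‖) (hψφ : ∀ v, ψ (φ v) = v) :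
    projConstWith V ν ≤ B := by
  refine Real.sSup_le ?_ hB
  rintro _ ⟨Z, _, _, I, hI, rfl⟩
  have φ_le (v : V) : ‖φ v‖ ≤ ‖I v‖ := (hφ v).trans_eq (hI v).symm
  have I_injective : Function.Injective I := (injective_iff_map_eq_zero I).2 fun v hv => by
    rw [← hψφ v, norm_le_zero_iff.1 ((φ_le v).trans_eq (by rw [hv, norm_zero])), map_zero]
  let e := LinearEquiv.ofInjective I I_injective
  let f : LinearMap.range I →L[ℂ] (J → ℂ) :=
    LinearMap.mkContinuous (φ ∘ₗ e.symm.toLinearMap) 1 fun y => by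
      simpa [e] using (φ_le (e.symm y)).trans_eq (congrArg norm (congrArg Subtype.val
        (e.apply_symm_apply y)))
  obtain ⟨g, hgf, hg⟩ := exists_extension_pi_norm_le (LinearMap.range I) f
  have hgI (v : V) : g (I v) = φ v := (hgf (e v)).trans (by simp [f])
  have hg_one : ‖g‖ ≤ 1 := hg.trans (LinearMap.mkContinuous_norm_le _ zero_le_one _)
  let P : Z →L[ℂ] Z := (LinearMap.toContinuousLinearMap (I ∘ₗ ψ)).comp g
  have hP (z : Z) : P z = I (ψ (g z)) := rfl
  have norm_P_le : ‖P‖ ≤ B := ContinuousLinearMap.opNorm_le_bound _ hB fun z => calc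
    ‖P z‖ = ν (ψ (g z)) := by rw [hP, hI]
    _ ≤ B * ‖g z‖ := hψ _
    _ ≤ B * ‖z‖ := by gcongr; exact g.le_of_opNorm_le hg_one z |>.trans_eq (one_mul _)
  refine csInf_le_of_le ⟨0, ?_⟩ ⟨P, fun v => ?_, fun z => ⟨_, hP z⟩, rfl⟩ norm_P_le
  · rintro _ ⟨Q, -, -, rfl⟩
    exact norm_nonneg Q
  · rw [hP, hgI, hψφ]

end ProjectionConstant

section OptimalDesign

theorem convexHull_range_eq_image_stdSimplex {ι E : Type*} [Fintype ι] [AddCommGroup E] [Module ℝ E]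
    (f : ι → E) :
    convexHull ℝ (Set.range f) = (fun w : ι → ℝ => ∑ i, w i • f i) '' stdSimplex ℝ ι := by
  classical
  rw [← convexHull_rangle_single_eq_stdSimplex]
  refine Eq.trans ?_ ((Fintype.linearCombination ℝ f).image_convexHull _).symm
  rw [← Set.range_comp]
  congr 2
  funext i
  simp [Fintype.linearCombination_apply_single]

theorem exists_range_fin_of_mem_convexHull {E : Type*} [AddCommGroup E] [Module ℝ E]
    [FiniteDimensional ℝ E] {K : Set E} {x : E} (hx : x ∈ convexHull ℝ K) :
    ∃ f : Fin (Module.finrank ℝ E + 1) → E, (∀ i, f i ∈ K) ∧ x ∈ convexHull ℝ (Set.range f) := by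
  rw [convexHull_eq_union] at hx
  simp only [Set.mem_iUnion] at hx
  obtain ⟨t, htK, ht, hxt⟩ := hx
  have : Nonempty t := (convexHull_nonempty_iff.1 ⟨x, hxt⟩).to_subtype
  have card_le : Fintype.card t ≤ Module.finrank ℝ E + 1 :=
    ht.card_le_finrank_succ.trans (Nat.succ_le_succ (Submodule.finrank_le _))
  obtain ⟨e⟩ := Function.Embedding.nonempty_of_card_le
    (card_le.trans_eq (Fintype.card_fin (Module.finrank ℝ E + 1)).symm)
  refine ⟨Subtype.val ∘ Function.invFun e, fun i => htK (Subtype.prop _), ?_⟩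
  rwa [(Function.invFun_surjective e.injective).range_comp, Subtype.range_coe]

theorem isCompact_convexHull_of_finiteDimensional {E : Type*} [AddCommGroup E] [Module ℝ E]
    [TopologicalSpace E] [ContinuousAdd E] [ContinuousSMul ℝ E] [FiniteDimensional ℝ E]
    {K : Set E} (hK : IsCompact K) : IsCompact (convexHull ℝ K) := by
  let ι := Fin (Module.finrank ℝ E + 1)
  have convexHull_eq : convexHull ℝ K = (fun x : (ι → ℝ) × (ι → E) =>
      ∑ i, x.1 i • x.2 i) '' (stdSimplex ℝ ι ×ˢ Set.univ.pi fun _ => K) := by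
    refine Set.Subset.antisymm (fun x hx => ?_) ?_
    · obtain ⟨f, hf, hxf⟩ := exists_range_fin_of_mem_convexHull hx
      rw [convexHull_range_eq_image_stdSimplex] at hxf
      obtain ⟨w, hw, rfl⟩ := hxf
      exact ⟨(w, f), ⟨hw, fun i _ => hf i⟩, rfl⟩
    · rintro _ ⟨⟨w, f⟩, ⟨⟨w_nonneg, w_sum⟩, hf⟩, rfl⟩
      exact (convex_convexHull ℝ K).sum_mem (fun i _ => w_nonneg i) w_sum
        fun i _ => subset_convexHull ℝ K (hf i trivial)
  rw [convexHull_eq]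
  exact ((isCompact_stdSimplex ℝ ι).prod (isCompact_univ_pi fun _ => hK)).image (by fun_prop)

theorem sum_nonpos_of_prod_one_add_mul_le_one {ι : Type*} [Fintype ι] {x : ι → ℝ}
    (h : ∀ t ∈ Set.Ioo (0 : ℝ) 1, ∏ i, (1 + t * x i) ≤ 1) : ∑ i, x i ≤ 0 := by
  classical
  have hasDerivAt_prod : HasDerivAt (fun t => ∏ i, (1 + t * x i)) (∑ i, x i) 0 := by
    simpa using HasDerivAt.fun_finsetProd fun i (_ : i ∈ univ) =>
      ((hasDerivAt_id (0 : ℝ)).mul_const (x i)).const_add 1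
  refine le_of_tendsto hasDerivAt_prod.tendsto_slope_zero_right ?_
  filter_upwards [Ioo_mem_nhdsGT (zero_lt_one' ℝ)] with t ht
  simpa using mul_nonpos_of_nonneg_of_nonpos (inv_nonneg.2 ht.1.le) (sub_nonpos.2 (h t ht))

/-- Take `T` maximising `∏ i, T i` over the convex hull; the bound is the first order condition. -/
theorem exists_mem_convexHull_sum_div_le_card {ι : Type*} [Fintype ι] {K : Set (ι → ℝ)}
    (hK : IsCompact K) (nonneg : ∀ s ∈ K, 0 ≤ s) (exists_pos : ∃ s ∈ K, ∀ i, 0 < s i) :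
    ∃ T ∈ convexHull ℝ K, (∀ i, 0 < T i) ∧ ∀ s ∈ K, ∑ i, s i / T i ≤ Fintype.card ι := by
  obtain ⟨s₀, hs₀, s₀_pos⟩ := exists_pos
  obtain ⟨T, hT, T_max⟩ := (isCompact_convexHull_of_finiteDimensional hK).exists_isMaxOn
    ⟨s₀, subset_convexHull ℝ K hs₀⟩ (f := fun s => ∏ i, s i) (by fun_prop)
  have T_nonneg : 0 ≤ T := convexHull_min nonneg (convex_Ici 0) hT
  have prod_pos : 0 < ∏ i, T i :=
    (Finset.prod_pos fun i _ => s₀_pos i).trans_le (T_max (subset_convexHull ℝ K hs₀))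
  have T_pos (i : ι) : 0 < T i :=
    (T_nonneg i).lt_of_ne' (Finset.prod_ne_zero_iff.1 prod_pos.ne' i (mem_univ i))
  refine ⟨T, hT, T_pos, fun s hs => ?_⟩
  have sum_nonpos : ∑ i, (s i / T i - 1) ≤ 0 := by
    refine sum_nonpos_of_prod_one_add_mul_le_one fun t ht => ?_
    have segment_mem : T + t • (s - T) ∈ convexHull ℝ K :=
      (convex_convexHull ℝ K).add_smul_sub_mem hT (subset_convexHull ℝ K hs) ⟨ht.1.le, ht.2.le⟩
    have prod_eq : ∏ i, (T + t • (s - T)) i = (∏ i, T i) * ∏ i, (1 + t * (s i / T i - 1)) := by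
      rw [← Finset.prod_mul_distrib]
      refine Finset.prod_congr rfl fun i _ => ?_
      have := (T_pos i).ne'
      simp only [Pi.add_apply, Pi.smul_apply, Pi.sub_apply, smul_eq_mul]
      field_simp
    exact (mul_le_iff_le_one_right prod_pos).1 (prod_eq ▸ T_max segment_mem)
  simpa [Finset.sum_sub_distrib] using sum_nonpos

theorem exists_design_sum_div_le_card {X κ : Type*} [TopologicalSpace X] [Fintype κ] {K : Set X}
    (hK : IsCompact K) {F : X → κ → ℝ} (hF : Continuous F) (nonneg : ∀ z ∈ K, 0 ≤ F z)
    (exists_pos : ∃ z ∈ K, ∀ i, 0 < F z i) :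
    ∃ (J : Type) (_ : Fintype J) (l : J → ℝ) (w : J → X) (T : κ → ℝ),
      (∀ j, 0 ≤ l j) ∧ ∑ j, l j = 1 ∧ (∀ j, w j ∈ K) ∧ (∀ i, ∑ j, l j * F (w j) i = T i) ∧
        (∀ i, 0 < T i) ∧ ∀ z ∈ K, ∑ i, F z i / T i ≤ Fintype.card κ := by
  obtain ⟨T, hT, T_pos, sum_div_le⟩ := exists_mem_convexHull_sum_div_le_card (hK.image hF)
    (Set.forall_mem_image.2 nonneg) (Set.exists_mem_image.2 exists_pos)
  obtain ⟨J, _, l, y, l_nonneg, l_sum, hy, sum_eq_T⟩ := mem_convexHull_iff_exists_fintype.1 hT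
  choose w hw hwy using hy
  exact ⟨J, inferInstance, l, w, T, l_nonneg, l_sum, hw, fun i => by simp [← sum_eq_T, hwy], T_pos,
    Set.forall_mem_image.1 sum_div_le⟩

theorem sum_mul_sqrt_sum_le_sqrt_sum_div {J κ : Type*} [Fintype J] [Fintype κ] {l : J → ℝ}
    {F : J → κ → ℝ} {T f : κ → ℝ} (l_nonneg : ∀ j, 0 ≤ l j) (l_sum : ∑ j, l j = 1)
    (F_nonneg : ∀ j i, 0 ≤ F j i) (f_nonneg : ∀ i, 0 ≤ f i) (sum_F : ∀ i, ∑ j, l j * F j i = T i) :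
    ∑ j, l j * √(∑ i, F j i * (f i / T i ^ 2)) ≤ √(∑ i, f i / T i) := by
  calc ∑ j, l j * √(∑ i, F j i * (f i / T i ^ 2))
      ≤ √(∑ j, l j * ∑ i, F j i * (f i / T i ^ 2)) :=
        Real.strictConcaveOn_sqrt.concaveOn.le_map_sum (fun j _ => l_nonneg j) l_sum fun j _ =>
          Finset.sum_nonneg fun i _ => mul_nonneg (F_nonneg j i) (by have := f_nonneg i; positivity)
    _ = √(∑ i, (∑ j, l j * F j i) * (f i / T i ^ 2)) := by
        simp only [Finset.mul_sum, Finset.sum_mul, ← mul_assoc]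
        rw [Finset.sum_comm]
    _ = √(∑ i, f i / T i) := by
        congr 1
        refine Finset.sum_congr rfl fun i _ => ?_
        rw [sum_F, mul_div_left_comm, sq, div_self_mul_self', div_eq_mul_inv]

end OptimalDesign

section Monomials

/-- The monomial `z^α = ∏ i, z i ^ α i`. It is also evaluated at real vectors such as
`(‖z i‖)_i`. -/
def multiPow {ι M : Type*} [Fintype ι] [CommMonoid M] (α : ι → ℕ) (z : ι → M) : M :=
  ∏ i, z i ^ α i

variable {ι M : Type*} [Fintype ι]

theorem multiPow_mul [CommMonoid M] (α : ι → ℕ) (z w : ι → M) :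
    multiPow α (z * w) = multiPow α z * multiPow α w := by
  simp [multiPow, mul_pow, Finset.prod_mul_distrib]

theorem multiPow_nonneg {x : ι → ℝ} (α : ι → ℕ) (hx : 0 ≤ x) : 0 ≤ multiPow α x :=
  Finset.prod_nonneg fun i _ => pow_nonneg (hx i) _

theorem multiPow_ne_zero [CommMonoidWithZero M] [NoZeroDivisors M] [Nontrivial M] (α : ι → ℕ)
    {z : ι → M} (hz : ∀ i, z i ≠ 0) : multiPow α z ≠ 0 :=
  Finset.prod_ne_zero_iff.2 fun i _ => pow_ne_zero _ (hz i)

theorem norm_multiPow [SeminormedCommRing M] [NormMulClass M] [NormOneClass M] (α : ι → ℕ)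
    (z : ι → M) : ‖multiPow α z‖ = multiPow α fun i => ‖z i‖ := by
  simp [multiPow, norm_prod]

theorem multiPow_rpow {x : ι → ℝ} (α : ι → ℕ) (hx : 0 ≤ x) (q : ℝ) :
    multiPow α x ^ q = multiPow α fun i => x i ^ q := by
  rw [multiPow, ← Real.finsetProd_rpow _ _ fun i _ => pow_nonneg (hx i) _]
  exact Finset.prod_congr rfl fun i _ => (Real.rpow_pow_comm (hx i) q (α i)).symm

theorem continuous_multiPow [CommMonoid M] [TopologicalSpace M] [ContinuousMul M] (α : ι → ℕ) :
    Continuous (multiPow α : (ι → M) → M) := by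
  unfold multiPow
  fun_prop

end Monomials

section DiscreteTorus

variable {ι : Type*} {N : ℕ} [NeZero N]

/-- A point of the discrete torus: the coordinates are the `N`-th roots of unity with exponents
`k i`. -/
noncomputable def torusPoint (k : ι → ZMod N) : ι → ℂ :=
  fun i => ZMod.stdAddChar (k i)

theorem norm_torusPoint_apply (k : ι → ZMod N) (i : ι) : ‖torusPoint k i‖ = 1 :=
  AddChar.norm_apply _ _

variable [Fintype ι]

/-- The monomial `z^α` restricted to the discrete torus, as a character. -/
noncomputable def torusChar (N : ℕ) [NeZero N] (α : ι → ℕ) : AddChar (ι → ZMod N) ℂ where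
  toFun k := multiPow α (torusPoint k)
  map_zero_eq_one' := by simp [multiPow, torusPoint]
  map_add_eq_mul' k l := by
    rw [← multiPow_mul]
    congr 1
    ext i
    simp [torusPoint, AddChar.map_add_eq_mul]

theorem torusChar_single_one [DecidableEq ι] (α : ι → ℕ) (i : ι) :
    torusChar N α (Pi.single i 1) = ZMod.stdAddChar (α i : ZMod N) := by
  refine (Finset.prod_eq_single i (fun j _ hj => ?_) (by simp)).trans ?_
  · simp [torusPoint, hj]
  · simp [torusPoint, ← AddChar.map_nsmul_eq_pow]

theorem torusChar_injOn : Set.InjOn (torusChar N) {α : ι → ℕ | ∀ i, α i < N} := by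
  classical
  intro α hα β hβ h
  funext i
  have char_eq := DFunLike.congr_fun h (Pi.single i 1)
  rw [torusChar_single_one, torusChar_single_one, ZMod.injective_stdAddChar.eq_iff,
    ZMod.natCast_eq_natCast_iff', Nat.mod_eq_of_lt (hα i), Nat.mod_eq_of_lt (hβ i)] at char_eq
  exact char_eq

theorem expect_multiPow_torusPoint_mul_conj [DecidableEq ι] {α β : ι → ℕ}
    (hα : ∀ i, α i < N) (hβ : ∀ i, β i < N) :
    𝔼 k : ι → ZMod N, multiPow α (torusPoint k) * conj (multiPow β (torusPoint k)) =
      if α = β then 1 else 0 := by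
  have h := AddChar.wInner_cWeight_eq_boole (torusChar N β) (torusChar N α)
  rw [RCLike.wInner_cWeight_eq_expect] at h
  simpa [torusChar_injOn.eq_iff hβ hα, eq_comm] using! h

end DiscreteTorus

section HomogeneousPolynomials

variable {n m : ℕ}

/-- The multi-indices `α` with `|α| = m`, which index the coefficients in `Coef n m`. -/
abbrev MultiIndex (n m : ℕ) := { α : Fin n → ℕ // α ∈ Finset.Nat.antidiagonalTuple n m }

theorem MultiIndex.sum_eq (α : MultiIndex n m) : ∑ i, α.1 i = m :=
  Finset.Nat.mem_antidiagonalTuple.1 α.2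

theorem MultiIndex.apply_lt_succ (α : MultiIndex n m) (i : Fin n) : α.1 i < m + 1 :=
  Nat.lt_succ_of_le <|
    (Finset.single_le_sum (fun _ _ => Nat.zero_le _) (mem_univ i)).trans_eq α.sum_eq

/-- Evaluation of homogeneous polynomials at `z`. -/
noncomputable def evalCLinearMap (z : Fin n → ℂ) : Coef n m →ₗ[ℂ] ℂ where
  toFun a := evalC a z
  map_add' a b := by simp [evalC, add_mul, Finset.sum_add_distrib]
  map_smul' c a := by simp [evalC, mul_assoc, Finset.mul_sum]

theorem continuous_evalC (a : Coef n m) : Continuous (evalC a) :=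
  continuous_finsetSum _ fun α _ => continuous_const.mul (continuous_multiPow α.1)

theorem expect_evalC_mul_torusPoint (a : Coef n m) (w : Fin n → ℂ) (α : MultiIndex n m) :
    𝔼 k : Fin n → ZMod (m + 1),
        evalC a (w * torusPoint k) * conj (multiPow α.1 (torusPoint k)) =
      a α * multiPow α.1 w := by
  have expand (k : Fin n → ZMod (m + 1)) :
      evalC a (w * torusPoint k) * conj (multiPow α.1 (torusPoint k)) =
        ∑ β : MultiIndex n m, a β * multiPow β.1 w *
          (multiPow β.1 (torusPoint k) * conj (multiPow α.1 (torusPoint k))) := by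
    change (∑ β : MultiIndex n m, a β * multiPow β.1 (w * torusPoint k)) * _ = _
    rw [Finset.sum_mul]
    exact Finset.sum_congr rfl fun β _ => by rw [multiPow_mul]; ring
  simp only [expand, Finset.expect_sum_comm, ← Finset.mul_expect,
    expect_multiPow_torusPoint_mul_conj (MultiIndex.apply_lt_succ _) α.apply_lt_succ,
    Subtype.coe_inj]
  simp

theorem expect_norm_evalC_torusPoint_sq (b : Coef n m) :
    𝔼 k : Fin n → ZMod (m + 1), ‖evalC b (torusPoint k)‖ ^ 2 = ∑ α, ‖b α‖ ^ 2 := by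
  have expand (k : Fin n → ZMod (m + 1)) : ((‖evalC b (torusPoint k)‖ ^ 2 : ℝ) : ℂ) =
      ∑ α : MultiIndex n m, conj (b α) *
        (evalC b (1 * torusPoint k) * conj (multiPow α.1 (torusPoint k))) := by
    rw [Complex.ofReal_pow, ← Complex.mul_conj', one_mul]
    nth_rw 2 [evalC]
    rw [map_sum, Finset.mul_sum]
    exact Finset.sum_congr rfl fun α _ => by rw [map_mul, multiPow]; ring
  apply Complex.ofReal_injective
  rw [Complex.ofReal_expect]
  simp only [expand, Finset.expect_sum_comm, ← Finset.mul_expect, expect_evalC_mul_torusPoint]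
  simp [multiPow, Complex.conj_mul']

theorem expect_norm_evalC_torusPoint_le (b : Coef n m) :
    𝔼 k : Fin n → ZMod (m + 1), ‖evalC b (torusPoint k)‖ ≤ √(∑ α, ‖b α‖ ^ 2) := by
  refine Real.le_sqrt_of_sq_le ?_
  rw [← expect_norm_evalC_torusPoint_sq]
  simpa using Finset.expect_mul_sq_le_sq_mul_sq univ
    (fun k : Fin n → ZMod (m + 1) => ‖evalC b (torusPoint k)‖) 1

/-- The family dual to evaluation on `w * torusPoint k`, up to the weights `c`: the coefficients
`c α` are multiplied by conjugate characters of the torus. The factor `1 / card` turns sums over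
the torus into averages. -/
noncomputable def torusTwist (c : Coef n m) (k : Fin n → ZMod (m + 1)) : Coef n m :=
  fun α => c α * conj (multiPow α.1 (torusPoint k)) / Fintype.card (Fin n → ZMod (m + 1))

theorem sum_evalC_smul_torusTwist (a c : Coef n m) (w : Fin n → ℂ) :
    ∑ k, evalC a (w * torusPoint k) • torusTwist c k = fun α => a α * (c α * multiPow α.1 w) := by
  funext α
  calc (∑ k, evalC a (w * torusPoint k) • torusTwist c k) α
      = c α * 𝔼 k : Fin n → ZMod (m + 1),
          evalC a (w * torusPoint k) * conj (multiPow α.1 (torusPoint k)) := by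
        rw [Finset.sum_apply, Fintype.expect_eq_sum_div_card, Finset.sum_div, Finset.mul_sum]
        refine Finset.sum_congr rfl fun k _ => ?_
        simp only [torusTwist, Pi.smul_apply, smul_eq_mul]
        ring
    _ = a α * (c α * multiPow α.1 w) := by rw [expect_evalC_mul_torusPoint]; ring

theorem evalC_torusTwist (c : Coef n m) (k : Fin n → ZMod (m + 1)) (z : Fin n → ℂ) :
    evalC (torusTwist c k) z =
      conj (evalC (fun α => conj (c α * multiPow α.1 z)) (torusPoint k)) /
        Fintype.card (Fin n → ZMod (m + 1)) := by
  change ∑ α : MultiIndex n m, torusTwist c k α * multiPow α.1 z =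
    conj (∑ α : MultiIndex n m, _ * multiPow α.1 (torusPoint k)) / _
  rw [map_sum, Finset.sum_div]
  refine Finset.sum_congr rfl fun α _ => ?_
  simp only [torusTwist, map_mul, Complex.conj_conj]
  ring

theorem sum_norm_evalC_torusTwist_le (c : Coef n m) (z : Fin n → ℂ) :
    ∑ k, ‖evalC (torusTwist c k) z‖ ≤ √(∑ α : MultiIndex n m, ‖c α * multiPow α.1 z‖ ^ 2) := by
  set b : Coef n m := fun α => conj (c α * multiPow α.1 z) with hb
  calc ∑ k, ‖evalC (torusTwist c k) z‖
      = 𝔼 k : Fin n → ZMod (m + 1), ‖evalC b (torusPoint k)‖ := by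
        rw [Fintype.expect_eq_sum_div_card, Finset.sum_div]
        simp only [evalC_torusTwist, hb, norm_div, RCLike.norm_conj, Complex.norm_natCast]
    _ ≤ √(∑ α, ‖b α‖ ^ 2) := expect_norm_evalC_torusPoint_le b
    _ = √(∑ α : MultiIndex n m, ‖c α * multiPow α.1 z‖ ^ 2) := by simp only [hb, RCLike.norm_conj]

end HomogeneousPolynomials

section ReinhardtSets

variable {n m : ℕ} {K : Set (Fin n → ℂ)}

/-- The supremum norm over `K` of the homogeneous polynomial with coefficients `a`. -/
noncomputable def polyNormOn (K : Set (Fin n → ℂ)) (a : Coef n m) : ℝ :=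
  sSup {x : ℝ | ∃ z ∈ K, x = ‖evalC a z‖}

/-- Reinhardt sets: membership of `z` depends only on the moduli of its coordinates. -/
def IsReinhardt (K : Set (Fin n → ℂ)) : Prop :=
  ∀ z ∈ K, ∀ w : Fin n → ℂ, (∀ i, ‖w i‖ = ‖z i‖) → w ∈ K

theorem IsReinhardt.mul_torusPoint_mem {N : ℕ} [NeZero N] (hK : IsReinhardt K) {z : Fin n → ℂ}
    (hz : z ∈ K) (k : Fin n → ZMod N) : z * torusPoint k ∈ K :=
  hK z hz _ fun i => by simp [norm_torusPoint_apply]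

theorem norm_evalC_le_polyNormOn (hK : Bornology.IsBounded K) (a : Coef n m) {z : Fin n → ℂ}
    (hz : z ∈ K) : ‖evalC a z‖ ≤ polyNormOn K a := by
  refine le_csSup ?_ ⟨z, hz, rfl⟩
  obtain ⟨C, hC⟩ := hK.isCompact_closure.exists_bound_of_continuousOn
    (continuous_evalC a).continuousOn
  refine ⟨C, ?_⟩
  rintro _ ⟨w, hw, rfl⟩
  exact hC w (subset_closure hw)

theorem projConstWith_polyNormOn_le_of_reproducing {J : Type*} [Fintype J]
    (hK : Bornology.IsBounded K) {w : J → Fin n → ℂ} (hw : ∀ j, w j ∈ K) {v : J → Coef n m}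
    {B : ℝ} (hB : 0 ≤ B) (reproducing : ∀ a, ∑ j, evalC a (w j) • v j = a)
    (sum_le : ∀ z ∈ K, ∑ j, ‖evalC (v j) z‖ ≤ B) :
    projConstWith (Coef n m) (polyNormOn K) ≤ B := by
  refine projConstWith_le_of_factor_pi (φ := LinearMap.pi fun j => evalCLinearMap (w j))
    (ψ := Fintype.linearCombination ℂ v) hB (fun a => ?_) (fun c => ?_) reproducing
  · refine (pi_norm_le_iff_of_nonneg (Real.sSup_nonneg ?_)).2
      fun j => norm_evalC_le_polyNormOn hK a (hw j)
    rintro _ ⟨z, -, rfl⟩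
    exact norm_nonneg _
  · refine Real.sSup_le ?_ (by positivity)
    rintro _ ⟨z, hz, rfl⟩
    calc ‖evalC (Fintype.linearCombination ℂ v c) z‖
        = ‖∑ j, c j * evalC (v j) z‖ := by
          change ‖evalCLinearMap z (∑ j, c j • v j)‖ = _
          rw [map_sum]
          simp only [map_smul, smul_eq_mul]
          rfl
      _ ≤ ∑ j, ‖c j‖ * ‖evalC (v j) z‖ := by
          simpa only [norm_mul] using norm_sum_le univ fun j => c j * evalC (v j) z
      _ ≤ ∑ j, ‖c‖ * ‖evalC (v j) z‖ := by gcongr; exact norm_le_pi_norm c _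
      _ = (∑ j, ‖evalC (v j) z‖) * ‖c‖ := by rw [← Finset.mul_sum, mul_comm]
      _ ≤ B * ‖c‖ := by gcongr; exact sum_le z hz

theorem projConstWith_polyNormOn_le_of_isReinhardt {ι : Type*} [Fintype ι]
    (hK : Bornology.IsBounded K) (hKR : IsReinhardt K) {w : ι → Fin n → ℂ} (hw : ∀ j, w j ∈ K)
    {c : ι → Coef n m} {B : ℝ} (hB : 0 ≤ B)
    (sum_eq_one : ∀ α : MultiIndex n m, ∑ j, c j α * multiPow α.1 (w j) = 1)
    (sum_le : ∀ z ∈ K, ∑ j, √(∑ α : MultiIndex n m, ‖c j α * multiPow α.1 z‖ ^ 2) ≤ B) :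
    projConstWith (Coef n m) (polyNormOn K) ≤ B := by
  refine projConstWith_polyNormOn_le_of_reproducing hK
    (w := fun x : ι × (Fin n → ZMod (m + 1)) => w x.1 * torusPoint x.2)
    (v := fun x => torusTwist (c x.1) x.2)
    (fun x => hKR.mul_torusPoint_mem (hw x.1) x.2) hB (fun a => ?_) fun z hz => ?_
  · simp only [Fintype.sum_prod_type, sum_evalC_smul_torusTwist]
    funext α
    rw [Finset.sum_apply, ← Finset.mul_sum, sum_eq_one, mul_one]
  · rw [Fintype.sum_prod_type]
    exact (Finset.sum_le_sum fun j _ => sum_norm_evalC_torusTwist_le (c j) z).trans (sum_le z hz)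

theorem projConstWith_polyNormOn_le_of_sum_div_le
    (hK : Bornology.IsBounded K) (hKR : IsReinhardt K) {w : MultiIndex n m → Fin n → ℂ}
    (hw : ∀ α, w α ∈ K) (w_ne_zero : ∀ α, multiPow α.1 (w α) ≠ 0) {B : ℝ} (hB : 0 ≤ B)
    (sum_le : ∀ z ∈ K, ∑ α : MultiIndex n m, ‖multiPow α.1 z‖ / ‖multiPow α.1 (w α)‖ ≤ B) :
    projConstWith (Coef n m) (polyNormOn K) ≤ B := by
  refine projConstWith_polyNormOn_le_of_isReinhardt hK hKR hw
    (c := fun α => Pi.single α (multiPow α.1 (w α))⁻¹) hB (fun α => ?_) fun z hz => ?_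
  · rw [Finset.sum_eq_single α (fun β _ hβ => by simp [hβ.symm]) (by simp), Pi.single_eq_same,
      inv_mul_cancel₀ (w_ne_zero α)]
  · refine le_of_eq_of_le (Finset.sum_congr rfl fun α _ => ?_) (sum_le z hz)
    rw [Finset.sum_eq_single α (fun β _ hβ => by simp [hβ]) (by simp), Real.sqrt_sq (norm_nonneg _),
      Pi.single_eq_same, norm_mul, norm_inv, div_eq_inv_mul]

theorem projConstWith_polyNormOn_le_sqrt_card (hK : IsCompact K) (hKR : IsReinhardt K)
    (exists_ne_zero : ∃ z ∈ K, ∀ i, z i ≠ 0) :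
    projConstWith (Coef n m) (polyNormOn K) ≤ √(Fintype.card (MultiIndex n m)) := by
  let F : (Fin n → ℂ) → MultiIndex n m → ℝ := fun z α => ‖multiPow α.1 z‖ ^ 2
  obtain ⟨J, _, l, w, T, l_nonneg, l_sum, hw, sum_F, T_pos, sum_div_le⟩ :=
    exists_design_sum_div_le_card hK (F := F)
      (continuous_pi fun α => (continuous_multiPow α.1).norm.pow 2)
      (fun z _ α => sq_nonneg _)
      (exists_ne_zero.imp fun z hz => hz.imp_right fun z_ne_zero α =>
        pow_pos (norm_pos_iff.2 (multiPow_ne_zero α.1 z_ne_zero)) 2)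
  refine projConstWith_polyNormOn_le_of_isReinhardt hK.isBounded hKR hw
    (c := fun j α => l j * (conj (multiPow α.1 (w j)) / T α)) (Real.sqrt_nonneg _)
    (fun α => ?_) fun z hz => ?_
  · have T_ne_zero : (T α : ℂ) ≠ 0 := by exact_mod_cast (T_pos α).ne'
    calc ∑ j, l j * (conj (multiPow α.1 (w j)) / T α) * multiPow α.1 (w j)
        = ∑ j, ((l j * F (w j) α : ℝ) : ℂ) / T α := by
          refine Finset.sum_congr rfl fun j _ => ?_
          push_cast [F]
          rw [← Complex.conj_mul']
          ring
      _ = 1 := by rw [← Finset.sum_div, ← Complex.ofReal_sum, sum_F, div_self T_ne_zero]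
  · have norm_eq (j : J) (α : MultiIndex n m) :
        ‖(l j * (conj (multiPow α.1 (w j)) / T α) : ℂ) * multiPow α.1 z‖ ^ 2 =
          l j ^ 2 * (F (w j) α * (F z α / T α ^ 2)) := by
      simp only [F, norm_mul, norm_div, RCLike.norm_conj, Complex.norm_real, mul_pow, div_pow,
        Real.norm_eq_abs, sq_abs]
      ring
    calc ∑ j, √(∑ α : MultiIndex n m, ‖(l j * (conj (multiPow α.1 (w j)) / T α) : ℂ) *
            multiPow α.1 z‖ ^ 2)
        = ∑ j, l j * √(∑ α, F (w j) α * (F z α / T α ^ 2)) := by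
          refine Finset.sum_congr rfl fun j _ => ?_
          simp only [norm_eq]
          rw [← Finset.mul_sum, Real.sqrt_mul (sq_nonneg _), Real.sqrt_sq (l_nonneg j)]
      _ ≤ √(∑ α, F z α / T α) :=
          sum_mul_sqrt_sum_le_sqrt_sum_div l_nonneg l_sum (fun _ _ => sq_nonneg _)
            (fun _ => sq_nonneg _) sum_F
      _ ≤ √(Fintype.card (MultiIndex n m)) := Real.sqrt_le_sqrt (sum_div_le z hz)

end ReinhardtSets

section LpBall

variable {p : ℝ≥0∞} {n m : ℕ}

/-- The closed unit ball of `ℓ_p^n`. -/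
def lpBall (p : ℝ≥0∞) (n : ℕ) : Set (Fin n → ℂ) := {z | pNorm p z ≤ 1}

theorem pNorm_eq_norm_toLp (hp : p ≠ 0) (z : Fin n → ℂ) : pNorm p z = ‖WithLp.toLp p z‖ := by
  rw [pNorm]
  split_ifs with h
  · subst h
    rw [PiLp.norm_eq_ciSup]
  · rw [PiLp.norm_eq_sum (ENNReal.toReal_pos hp h)]

theorem mem_lpBall_iff_sum_rpow_le_one (hp : p ≠ 0) (hp' : p ≠ ∞) {z : Fin n → ℂ} :
    z ∈ lpBall p n ↔ ∑ i, ‖z i‖ ^ p.toReal ≤ 1 := by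
  change pNorm p z ≤ 1 ↔ _
  rw [pNorm, if_neg hp', one_div, Real.rpow_inv_le_iff_of_pos (by positivity) zero_le_one
    (ENNReal.toReal_pos hp hp'), Real.one_rpow]

theorem isReinhardt_lpBall : IsReinhardt (lpBall p n) := fun z hz w hw => by
  change pNorm p w ≤ 1
  simpa only [pNorm, hw] using! hz

theorem isCompact_lpBall [Fact (1 ≤ p)] : IsCompact (lpBall p n) := by
  have p_ne_zero : p ≠ 0 := (zero_lt_one.trans_le (Fact.out : 1 ≤ p)).ne'
  have lpBall_eq : lpBall p n = (PiLp.homeomorph p fun _ : Fin n => ℂ).symm ⁻¹'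
      Metric.closedBall 0 1 := by
    ext z
    rw [Set.mem_preimage, mem_closedBall_zero_iff]
    exact iff_of_eq (congrArg (· ≤ 1) (pNorm_eq_norm_toLp p_ne_zero z))
  rw [lpBall_eq, Homeomorph.isCompact_preimage]
  exact isCompact_closedBall 0 1

theorem exists_mem_lpBall_ne_zero [Fact (1 ≤ p)] : ∃ z ∈ lpBall p n, ∀ i, z i ≠ 0 := by
  set t : ℝ := ‖WithLp.toLp p (1 : Fin n → ℂ)‖ with ht
  have one_add_t_pos : 0 < 1 + t := add_pos_of_pos_of_nonneg one_pos (norm_nonneg _)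
  refine ⟨((1 + t : ℝ) : ℂ)⁻¹ • 1, ?_, fun i => by
    simpa using! inv_ne_zero (Complex.ofReal_ne_zero.2 one_add_t_pos.ne')⟩
  change pNorm p _ ≤ 1
  rw [pNorm_eq_norm_toLp (zero_lt_one.trans_le (Fact.out : 1 ≤ p)).ne', WithLp.toLp_smul, norm_smul,
    ← ht, norm_inv, Complex.norm_real, Real.norm_of_nonneg one_add_t_pos.le,
    inv_mul_le_iff₀ one_add_t_pos]
  linarith

end LpBall

section Counting

variable {ι : Type*} [Fintype ι] {n m : ℕ}

theorem pow_self_le_exp_one_pow_mul_factorial (m : ℕ) :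
    (m : ℝ) ^ m ≤ Real.exp 1 ^ m * m.factorial := by
  have h := Real.pow_div_factorial_le_exp (m : ℝ) (Nat.cast_nonneg m) m
  rwa [div_le_iff₀ (by positivity), ← Real.exp_one_pow] at h

theorem card_multiIndex (n m : ℕ) : Fintype.card (MultiIndex n m) = n.multichoose m := by
  rw [Fintype.card_coe, ← Finset.piAntidiag_univ_fin_eq_antidiagonalTuple,
    ← Finset.map_sym_eq_piAntidiag, Finset.card_map, Finset.sym_univ, Finset.card_univ,
    Sym.card_sym_eq_multichoose, Fintype.card_fin]

theorem card_multiIndex_le (hm : 0 < m) :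
    (Fintype.card (MultiIndex n m) : ℝ) ≤ Real.exp 1 ^ m * (1 + (n : ℝ) / m) ^ m := by
  rw [card_multiIndex, Nat.multichoose_eq]
  calc ((n + m - 1).choose m : ℝ) ≤ ((n + m - 1 : ℕ) : ℝ) ^ m / m.factorial :=
        Nat.choose_le_pow_div m _
    _ ≤ ((n + m : ℕ) : ℝ) ^ m / m.factorial := by gcongr; exact Nat.sub_le _ _
    _ = (1 + (n : ℝ) / m) ^ m * m ^ m / m.factorial := by
        rw [← mul_pow]
        congr 2
        push_cast
        field_simp
        ring
    _ ≤ (1 + (n : ℝ) / m) ^ m * (Real.exp 1 ^ m * m.factorial) / m.factorial := by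
        gcongr
        exact pow_self_le_exp_one_pow_mul_factorial m
    _ = Real.exp 1 ^ m * (1 + (n : ℝ) / m) ^ m := by field_simp

theorem multiPow_natCast_pos (α : ι → ℕ) : 0 < multiPow α fun i => (α i : ℝ) :=
  Finset.prod_pos fun i _ => by dsimp only; exact_mod_cast Nat.pow_self_pos

theorem multiPow_natCast_div (α : ι → ℕ) (c : ℝ) :
    multiPow α (fun i => (α i : ℝ) / c) = (multiPow α fun i => (α i : ℝ)) / c ^ ∑ i, α i := by
  simp only [multiPow, div_pow, Finset.prod_div_distrib, Finset.prod_pow_eq_pow_sum]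

theorem multiPow_frequency_pos (α : ι → ℕ) :
    0 < multiPow α fun i => (α i : ℝ) / (∑ j, α j : ℕ) := by
  rw [multiPow_natCast_div]
  exact div_pos (multiPow_natCast_pos α) (by exact_mod_cast Nat.pow_self_pos)

theorem inv_multiPow_frequency_le (α : ι → ℕ) :
    (multiPow α fun i => (α i : ℝ) / (∑ j, α j : ℕ))⁻¹ ≤
      Real.exp 1 ^ (∑ i, α i) * Nat.multinomial univ α := by
  have factorial_le : (∏ i, ((α i).factorial : ℝ)) ≤ multiPow α fun i => (α i : ℝ) :=
    Finset.prod_le_prod (fun i _ => by positivity) fun i _ => by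
      dsimp only
      exact_mod_cast Nat.factorial_le_pow (α i)
  have multinomial_eq : ((∑ i, α i).factorial : ℝ) =
      (∏ i, ((α i).factorial : ℝ)) * Nat.multinomial univ α := by
    exact_mod_cast (Nat.multinomial_spec univ α).symm
  rw [multiPow_natCast_div, inv_div, div_le_iff₀ (multiPow_natCast_pos α)]
  calc ((∑ i, α i : ℕ) : ℝ) ^ ∑ i, α i
      ≤ Real.exp 1 ^ (∑ i, α i) * (∑ i, α i).factorial := pow_self_le_exp_one_pow_mul_factorial _
    _ = Real.exp 1 ^ (∑ i, α i) * Nat.multinomial univ α * ∏ i, ((α i).factorial : ℝ) := by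
        rw [multinomial_eq]
        ring
    _ ≤ _ := by gcongr

theorem sum_multinomial_mul_multiPow {R : Type*} [CommSemiring R] (x : Fin n → R) :
    ∑ α : MultiIndex n m, (Nat.multinomial univ α.1 : R) * multiPow α.1 x = (∑ i, x i) ^ m := by
  rw [Finset.sum_pow_eq_sum_piAntidiag, Finset.piAntidiag_univ_fin_eq_antidiagonalTuple,
    ← Finset.sum_coe_sort (Finset.Nat.antidiagonalTuple n m)]
  rfl

end Counting

section ExtremalPoints

variable {ι : Type*} [Fintype ι] {p : ℝ≥0∞} {n m : ℕ}

/-- The maximiser of `|z ^ α|` over the unit ball of `ℓ_q`, with coordinates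
`(α i / |α|) ^ (1 / q)`. -/
noncomputable def extremalPoint (q : ℝ) (α : ι → ℕ) : ι → ℂ :=
  fun i => (((α i : ℝ) / (∑ j, α j : ℕ)) ^ (1 / q) : ℝ)

theorem norm_extremalPoint_rpow {q : ℝ} (hq : q ≠ 0) (α : ι → ℕ) (i : ι) :
    ‖extremalPoint q α i‖ ^ q = (α i : ℝ) / (∑ j, α j : ℕ) := by
  rw [extremalPoint, Complex.norm_real, Real.norm_of_nonneg (by positivity),
    ← Real.rpow_mul (by positivity), one_div_mul_cancel hq, Real.rpow_one]

theorem extremalPoint_mem_lpBall (hp : p ≠ 0) (hp' : p ≠ ∞) (α : Fin n → ℕ) :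
    extremalPoint p.toReal α ∈ lpBall p n := by
  rw [mem_lpBall_iff_sum_rpow_le_one hp hp']
  simp only [norm_extremalPoint_rpow (ENNReal.toReal_pos hp hp').ne', ← Finset.sum_div,
    Nat.cast_sum]
  exact div_self_le_one _

theorem norm_multiPow_rpow (α : ι → ℕ) (z : ι → ℂ) (q : ℝ) :
    ‖multiPow α z‖ ^ q = multiPow α fun i => ‖z i‖ ^ q := by
  rw [norm_multiPow, multiPow_rpow α fun i => norm_nonneg (z i)]

theorem norm_multiPow_extremalPoint_rpow {q : ℝ} (hq : q ≠ 0) (α : ι → ℕ) :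
    ‖multiPow α (extremalPoint q α)‖ ^ q = multiPow α fun i => (α i : ℝ) / (∑ j, α j : ℕ) := by
  simp only [norm_multiPow_rpow, norm_extremalPoint_rpow hq]

theorem multiPow_extremalPoint_ne_zero {q : ℝ} (hq : q ≠ 0) (α : ι → ℕ) :
    multiPow α (extremalPoint q α) ≠ 0 := fun h => by
  have := multiPow_frequency_pos α
  rw [← norm_multiPow_extremalPoint_rpow hq, h, norm_zero, Real.zero_rpow hq] at this
  exact this.false

theorem norm_multiPow_div_extremalPoint_rpow_le {q : ℝ} (hq : q ≠ 0) (α : ι → ℕ) (z : ι → ℂ) :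
    (‖multiPow α z‖ / ‖multiPow α (extremalPoint q α)‖) ^ q ≤
      Real.exp 1 ^ (∑ i, α i) * (Nat.multinomial univ α * multiPow α fun i => ‖z i‖ ^ q) := by
  rw [Real.div_rpow (norm_nonneg _) (norm_nonneg _), norm_multiPow_extremalPoint_rpow hq,
    norm_multiPow_rpow, div_eq_inv_mul, ← mul_assoc]
  exact mul_le_mul_of_nonneg_right (inv_multiPow_frequency_le α)
    (multiPow_nonneg α fun i => by positivity)

theorem sum_norm_multiPow_div_extremalPoint_rpow_le (hp : p ≠ 0) (hp' : p ≠ ∞) {z : Fin n → ℂ}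
    (hz : z ∈ lpBall p n) :
    ∑ α : MultiIndex n m,
        (‖multiPow α.1 z‖ / ‖multiPow α.1 (extremalPoint p.toReal α.1)‖) ^ p.toReal ≤
      Real.exp 1 ^ m := by
  calc _ ≤ ∑ α : MultiIndex n m, Real.exp 1 ^ m *
          (Nat.multinomial univ α.1 * multiPow α.1 fun i => ‖z i‖ ^ p.toReal) := by
        refine Finset.sum_le_sum fun α _ => ?_
        simpa only [α.sum_eq] using norm_multiPow_div_extremalPoint_rpow_le
          (ENNReal.toReal_pos hp hp').ne' α.1 z
    _ = Real.exp 1 ^ m * (∑ i, ‖z i‖ ^ p.toReal) ^ m := by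
        rw [← Finset.mul_sum, sum_multinomial_mul_multiPow]
    _ ≤ Real.exp 1 ^ m := mul_le_of_le_one_right (by positivity) <|
        pow_le_one₀ (by positivity) ((mem_lpBall_iff_sum_rpow_le_one hp hp').1 hz)

end ExtremalPoints

section ProjectionConstantBounds

variable {p : ℝ≥0∞}

theorem projConstWith_polyNormLp_le_of_ne_top (hp : 1 ≤ p) (hp' : p ≠ ∞) (n m : ℕ) :
    projConstWith (Coef n m) (polyNormLp p n m) ≤
      (Fintype.card (MultiIndex n m) : ℝ) ^ (1 - 1 / p.toReal) *
        (Real.exp 1 ^ m) ^ (1 / p.toReal) := by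
  have : Fact (1 ≤ p) := ⟨hp⟩
  have p_ne_zero : p ≠ 0 := (zero_lt_one.trans_le hp).ne'
  have q_pos : 0 < p.toReal := ENNReal.toReal_pos p_ne_zero hp'
  have one_le_q : 1 ≤ p.toReal := by simpa using ENNReal.toReal_mono hp' hp
  refine projConstWith_polyNormOn_le_of_sum_div_le (K := lpBall p n) isCompact_lpBall.isBounded
    isReinhardt_lpBall (fun α => extremalPoint_mem_lpBall p_ne_zero hp' α.1)
    (fun α => multiPow_extremalPoint_ne_zero q_pos.ne' α.1) (by positivity) fun z hz => ?_
  have exponent_eq : 1 - 1 / p.toReal = (p.toReal - 1) * p.toReal⁻¹ := by field_simp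
  rw [exponent_eq, Real.rpow_mul (by positivity), one_div,
    ← Real.mul_rpow (by positivity) (by positivity),
    Real.le_rpow_inv_iff_of_pos (by positivity) (by positivity) q_pos]
  refine (Real.rpow_sum_le_const_mul_sum_rpow_of_nonneg _ one_le_q
    fun α _ => by positivity).trans ?_
  rw [Finset.card_univ]
  gcongr
  exact sum_norm_multiPow_div_extremalPoint_rpow_le p_ne_zero hp' hz

theorem projConstWith_polyNormLp_le_sqrt_card (hp : 1 ≤ p) (n m : ℕ) :
    projConstWith (Coef n m) (polyNormLp p n m) ≤ √(Fintype.card (MultiIndex n m)) :=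
  have : Fact (1 ≤ p) := ⟨hp⟩
  projConstWith_polyNormOn_le_sqrt_card (K := lpBall p n) isCompact_lpBall isReinhardt_lpBall
    exists_mem_lpBall_ne_zero

theorem projConstWith_polyNormLp_le (hp : 1 ≤ p) (n m : ℕ) :
    projConstWith (Coef n m) (polyNormLp p n m) ≤
      (Fintype.card (MultiIndex n m) : ℝ) ^ (1 - 1 / (min p 2).toReal) *
        (Real.exp 1 ^ m) ^ (1 / (min p 2).toReal) := by
  rcases le_total p 2 with h | h
  · rw [min_eq_left h]
    exact projConstWith_polyNormLp_le_of_ne_top hp (ne_top_of_le_ne_top ENNReal.ofNat_ne_top h) n m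
  · rw [min_eq_right h, ENNReal.toReal_ofNat]
    calc _ ≤ √(Fintype.card (MultiIndex n m)) := projConstWith_polyNormLp_le_sqrt_card hp n m
      _ = (Fintype.card (MultiIndex n m) : ℝ) ^ (1 - 1 / 2 : ℝ) := by
          rw [Real.sqrt_eq_rpow]
          norm_num
      _ ≤ _ := le_mul_of_one_le_right (by positivity) <| Real.one_le_rpow
          (one_le_pow₀ (Real.one_le_exp zero_le_one)) (by positivity)

theorem rpow_one_sub_mul_rpow_le {N E D s : ℝ} (hN : 0 ≤ N) (hE : 0 < E) (hD : 0 ≤ D)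
    (h : N ≤ E * D) (hs : s ≤ 1) : N ^ (1 - s) * E ^ s ≤ E * D ^ (1 - s) := by
  calc N ^ (1 - s) * E ^ s ≤ (E * D) ^ (1 - s) * E ^ s := by
        gcongr
    _ = (E ^ (1 - s) * E ^ s) * D ^ (1 - s) := by rw [Real.mul_rpow hE.le hD]; ring
    _ = E * D ^ (1 - s) := by rw [← Real.rpow_add hE, sub_add_cancel, Real.rpow_one]

theorem one_div_toReal_min_two_le_one (hp : 1 ≤ p) : 1 / (min p 2).toReal ≤ 1 := by
  have h : min p 2 ≠ ∞ := ne_top_of_le_ne_top ENNReal.ofNat_ne_top (min_le_right p 2)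
  have one_le : 1 ≤ (min p 2).toReal := by
    simpa using ENNReal.toReal_mono h (le_min hp one_le_two)
  exact div_le_one_of_le₀ one_le (zero_le_one.trans one_le)

end ProjectionConstantBounds

/-- There is an absolute constant `C ≥ 1` such that
`λ(𝒫(^m ℓ_p^n)) ≤ C^m · (1 + n/m)^{m(1 - 1/min(p,2))}` for all `1 ≤ p ≤ ∞` and `m, n`. -/
theorem projection_constant_polynomials_lp :
    ∃ C : ℝ, 1 ≤ C ∧ ∀ (p : ℝ≥0∞), 1 ≤ p → ∀ (m n : ℕ), 0 < m → 0 < n →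
      projConstWith (Coef n m) (polyNormLp p n m)
        ≤ C ^ m * (1 + (n : ℝ) / (m : ℝ)) ^ ((m : ℝ) * (1 - 1 / (min p 2).toReal)) := by
  refine ⟨Real.exp 1, Real.one_le_exp zero_le_one, fun p hp m n hm _ => ?_⟩
  rw [Real.rpow_natCast_mul (by positivity)]
  exact (projConstWith_polyNormLp_le hp n m).trans <| rpow_one_sub_mul_rpow_le (Nat.cast_nonneg _)
    (by positivity) (by positivity) (card_multiIndex_le hm) (one_div_toReal_min_two_le_one hp)
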